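/- arXiv:2009.05729 — 2 statements merged into one kernel-verified Lean document; each statement's English description precedes it below -/
import Mathlib

section
/- Let f : ℝ → ℝ be of bounded variation and let −∞ ≤ a < b ≤ ∞. Then Var_{(a,b)}(f) − Var_{(a,b)}(|f|) = Σ_{x ∈ D_l(f) ∩ (a,b)} [ |f(x) − f(x⁻)| − ||f|(x) − |f|(x⁻)| ] + Σ_{x ∈ D_r(f) ∩ (a,b)} [ |f(x) − f(x⁺)| − ||f|(x) − |f|(x⁺)| ], where the sums are over the (at most countably many) one-sided discontinuity points of f in (a,b). -/
open MeasureTheory Filter Set Topology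

/-- Average of |f| over the interval (a,b). -/
noncomputable def mAvg (f : ℝ → ℝ) (a b : ℝ) : ℝ := (∫ t in a..b, |f t|) / (b - a)

/-- Uncentered Hardy–Littlewood maximal function. -/
noncomputable def uMax (f : ℝ → ℝ) (x : ℝ) : ℝ :=
  sSup {y | ∃ a b : ℝ, a < b ∧ a ≤ x ∧ x ≤ b ∧ y = mAvg f a b}

/-- f has bounded variation on ℝ. -/
def BVfun (f : ℝ → ℝ) : Prop := BoundedVariationOn f Set.univ

/-- Total variation of f over a set, as a real number. -/
noncomputable def varOn (f : ℝ → ℝ) (s : Set ℝ) : ℝ := (eVariationOn f s).toReal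

/-- BV norm: |f(-∞)| + Var(f). -/
noncomputable def bvNorm (f : ℝ → ℝ) : ℝ :=
  |limUnder Filter.atBot f| + varOn f Set.univ

/-- Upper precise representative: limsup over intervals I ∋ x with |I| → 0 of averages of |f|. -/
noncomputable def ubar (f : ℝ → ℝ) (x : ℝ) : ℝ :=
  ⨅ h : {h : ℝ // 0 < h},
    sSup {y | ∃ a b : ℝ, a < b ∧ a ≤ x ∧ x ≤ b ∧ b - a ≤ h.1 ∧ y = mAvg f a b}

/-- The open "interval" (a,b) in ℝ with extended-real endpoints. -/
noncomputable def erealIoo (a b : EReal) : Set ℝ := {x : ℝ | a < (x : EReal) ∧ (x : EReal) < b}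

/-- Value of g at an extended-real point, understood as a limit at ±∞. -/
noncomputable def valAt (g : ℝ → ℝ) (a : EReal) : ℝ :=
  if a = ⊥ then limUnder Filter.atBot g
  else if a = ⊤ then limUnder Filter.atTop g
  else g a.toReal

open scoped ENNReal

/-- The amount by which the distance of two reals exceeds the distance of their absolute values. -/
noncomputable def absDefect (u v : ℝ) : ℝ≥0∞ := ENNReal.ofReal (|u - v| - abs (|u| - |v|))

lemma absDefect_comm (u v : ℝ) : absDefect u v = absDefect v u := by
  simp only [absDefect, abs_sub_comm]

lemma absDefect_neg (u v : ℝ) : absDefect (-u) (-v) = absDefect u v := by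
  rw [absDefect, absDefect, abs_neg, abs_neg, neg_sub_neg, abs_sub_comm v u]

lemma edist_eq_edist_abs_add_absDefect (u v : ℝ) :
    edist u v = edist |u| |v| + absDefect u v := by
  rw [edist_dist, edist_dist, Real.dist_eq, Real.dist_eq, absDefect,
    ← ENNReal.ofReal_add (abs_nonneg _) (sub_nonneg.2 (abs_abs_sub_abs_le _ _))]
  congr 1
  ring

lemma edist_eq_edist_abs_of_mul_nonneg {u v : ℝ} (h : 0 ≤ u * v) : edist u v = edist |u| |v| := by
  rw [edist_dist, edist_dist, Real.dist_eq, Real.dist_eq]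
  rcases mul_nonneg_iff.1 h with ⟨hu, hv⟩ | ⟨hu, hv⟩
  · rw [abs_of_nonneg hu, abs_of_nonneg hv]
  · rw [abs_of_nonpos hu, abs_of_nonpos hv, neg_sub_neg, abs_sub_comm]

lemma eVariationOn_abs_le (f : ℝ → ℝ) (s : Set ℝ) :
    eVariationOn (fun x => |f x|) s ≤ eVariationOn f s := by
  have h : LipschitzWith 1 (fun x : ℝ => |x|) :=
    LipschitzWith.of_dist_le_mul fun x y => by
      simpa [Real.dist_eq] using abs_abs_sub_abs_le x y
  simpa [Function.comp_def] using
    h.lipschitzOnWith.comp_eVariationOn_le (mapsTo_univ f s)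

lemma edist_add_edist_add_edist_le_eVariationOn (g : ℝ → ℝ) {u s t v : ℝ}
    (hus : u ≤ s) (hst : s ≤ t) (htv : t ≤ v) :
    edist (g u) (g s) + edist (g s) (g t) + edist (g t) (g v) ≤ eVariationOn g (Icc u v) := by
  have h₁ := eVariationOn.Icc_add_Icc g (hus.trans hst) htv (mem_univ t)
  have h₂ := eVariationOn.Icc_add_Icc g hus hst (mem_univ s)
  simp only [univ_inter] at h₁ h₂
  rw [← h₁, ← h₂]
  gcongr
  · exact eVariationOn.edist_le g (left_mem_Icc.2 hus) (right_mem_Icc.2 hus)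
  · exact eVariationOn.edist_le g (left_mem_Icc.2 hst) (right_mem_Icc.2 hst)
  · exact eVariationOn.edist_le g (left_mem_Icc.2 htv) (right_mem_Icc.2 htv)

lemma edist_add_edist_add_edist_le_of_tendsto_right {g : ℝ → ℝ} {u s v r : ℝ}
    (hus : u ≤ s) (hsv : s < v) (hr : Tendsto g (𝓝[>] s) (𝓝 r)) :
    edist (g u) (g s) + edist (g s) r + edist r (g v) ≤ eVariationOn g (Icc u v) := by
  refine le_of_tendsto ((tendsto_const_nhds.add (tendsto_const_nhds.edist hr)).add
    (hr.edist tendsto_const_nhds)) ?_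
  filter_upwards [Ioo_mem_nhdsGT hsv] with t ht
  exact edist_add_edist_add_edist_le_eVariationOn g hus ht.1.le ht.2.le

lemma edist_add_edist_add_edist_le_of_tendsto_left {g : ℝ → ℝ} {u s v l : ℝ}
    (hus : u < s) (hsv : s ≤ v) (hl : Tendsto g (𝓝[<] s) (𝓝 l)) :
    edist (g u) l + edist l (g s) + edist (g s) (g v) ≤ eVariationOn g (Icc u v) := by
  refine le_of_tendsto (((tendsto_const_nhds.edist hl).add
    (hl.edist tendsto_const_nhds)).add tendsto_const_nhds) ?_
  filter_upwards [Ioo_mem_nhdsLT hus] with t ht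
  exact edist_add_edist_add_edist_le_eVariationOn g ht.1.le ht.2.le hsv

/-- A function with one-sided limits which passes from nonnegative to negative values does so
across a one-sided limit at some point. -/
lemma exists_sign_change {f L R : ℝ → ℝ} (hL : ∀ x, Tendsto f (𝓝[<] x) (𝓝 (L x)))
    (hR : ∀ x, Tendsto f (𝓝[>] x) (𝓝 (R x))) {u v : ℝ} (huv : u ≤ v)
    (hu : 0 ≤ f u) (hv : f v < 0) :
    ∃ s, (s ∈ Ico u v ∧ 0 ≤ f s ∧ R s ≤ 0) ∨ (s ∈ Ioc u v ∧ f s ≤ 0 ∧ 0 ≤ L s) := by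
  set A : Set ℝ := {x ∈ Icc u v | 0 ≤ f x}
  have hne : A.Nonempty := ⟨u, ⟨le_rfl, huv⟩, hu⟩
  have hbdd : BddAbove A := ⟨v, fun x hx => hx.1.2⟩
  have hus : u ≤ sSup A := le_csSup hbdd ⟨⟨le_rfl, huv⟩, hu⟩
  have hsv : sSup A ≤ v := csSup_le hne fun x hx => hx.1.2
  refine ⟨sSup A, ?_⟩
  set s := sSup A
  by_cases hs : 0 ≤ f s
  · have hsv' : s < v := lt_of_le_of_ne hsv fun h => by
      rw [h] at hs
      exact hs.not_gt hv
    refine Or.inl ⟨⟨hus, hsv'⟩, hs, le_of_tendsto (hR s) ?_⟩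
    filter_upwards [Ioo_mem_nhdsGT hsv'] with t ht
    by_contra! h
    exact (le_csSup hbdd ⟨⟨hus.trans ht.1.le, ht.2.le⟩, h.le⟩).not_gt ht.1
  · have hus' : u < s := lt_of_le_of_ne hus fun h => hs (h ▸ hu)
    refine Or.inr ⟨⟨hus', hsv⟩, (not_le.1 hs).le, ?_⟩
    by_contra! hneg
    obtain ⟨t, hts, ht⟩ := (mem_nhdsLT_iff_exists_Ioo_subset.1 ((hL s).eventually_lt_const hneg))
    obtain ⟨x, hx, htx⟩ := exists_lt_of_lt_csSup hne hts
    have hxs : x ≤ s := le_csSup hbdd hx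
    rcases hxs.lt_or_eq with h | h
    · exact hx.2.not_gt (ht ⟨htx, h⟩)
    · exact hs (h ▸ hx.2)

lemma edist_le_eVariationOn_abs_add_tsum_absDefect {f L R : ℝ → ℝ}
    (hL : ∀ x, Tendsto f (𝓝[<] x) (𝓝 (L x))) (hR : ∀ x, Tendsto f (𝓝[>] x) (𝓝 (R x)))
    {u v : ℝ} (huv : u ≤ v) :
    edist (f u) (f v) ≤ eVariationOn (fun x => |f x|) (Icc u v) +
      ((∑' x : Ioc u v, absDefect (f x) (L x)) + ∑' x : Ico u v, absDefect (f x) (R x)) := by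
  rcases le_or_gt 0 (f u * f v) with h | h
  · rw [edist_eq_edist_abs_of_mul_nonneg h]
    exact le_add_right (eVariationOn.edist_le (fun x => |f x|) (left_mem_Icc.2 huv)
      (right_mem_Icc.2 huv))
  wlog hu : 0 < f u generalizing f L R
  · have := this (f := fun x => -f x) (L := fun x => -L x) (R := fun x => -R x)
      (fun x => (hL x).neg) (fun x => (hR x).neg) (by simpa using h)
      (by rcases mul_neg_iff.1 h with h | h <;> linarith [h.1])
    simpa only [absDefect_neg, abs_neg, edist_neg_neg] using this
  have hv : f v < 0 := by nlinarith
  obtain ⟨s, ⟨hs, hfs, hRs⟩ | ⟨hs, hfs, hLs⟩⟩ := exists_sign_change hL hR huv hu.le hv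
  · calc edist (f u) (f v)
        ≤ edist (f u) (f s) + edist (f s) (R s) + edist (R s) (f v) := edist_triangle4 _ _ _ _
      _ = edist |f u| |f s| + edist |f s| |R s| + edist |R s| |f v| + absDefect (f s) (R s) := by
        rw [edist_eq_edist_abs_of_mul_nonneg (mul_nonneg hu.le hfs),
          edist_eq_edist_abs_add_absDefect (f s),
          edist_eq_edist_abs_of_mul_nonneg (mul_nonneg_of_nonpos_of_nonpos hRs hv.le)]
        ring
      _ ≤ _ := by
        refine add_le_add (edist_add_edist_add_edist_le_of_tendsto_right hs.1 hs.2 (hR s).abs)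
          (le_add_left ?_)
        exact ENNReal.le_tsum (f := fun x : Ico u v => absDefect (f x) (R x)) ⟨s, hs⟩
  · calc edist (f u) (f v)
        ≤ edist (f u) (L s) + edist (L s) (f s) + edist (f s) (f v) := edist_triangle4 _ _ _ _
      _ = edist |f u| |L s| + edist |L s| |f s| + edist |f s| |f v| + absDefect (f s) (L s) := by
        rw [edist_eq_edist_abs_of_mul_nonneg (mul_nonneg hu.le hLs),
          edist_eq_edist_abs_add_absDefect (L s), absDefect_comm (L s),
          edist_eq_edist_abs_of_mul_nonneg (mul_nonneg_of_nonpos_of_nonpos hfs hv.le)]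
        ring
      _ ≤ _ := by
        refine add_le_add (edist_add_edist_add_edist_le_of_tendsto_left hs.1 hs.2 (hL s).abs)
          (le_add_right ?_)
        exact ENNReal.le_tsum (f := fun x : Ioc u v => absDefect (f x) (L x)) ⟨s, hs⟩

lemma ENNReal.tsum_Ioc_add_tsum_Ioc (φ : ℝ → ℝ≥0∞) {a b c : ℝ} (hab : a ≤ b) (hbc : b ≤ c) :
    (∑' x : Ioc a b, φ x) + ∑' x : Ioc b c, φ x = ∑' x : Ioc a c, φ x := by
  rw [← Ioc_union_Ioc_eq_Ioc hab hbc]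
  exact (ENNReal.summable.tsum_union_disjoint (Ioc_disjoint_Ioc_of_le le_rfl)
    ENNReal.summable).symm

lemma ENNReal.tsum_Ico_add_tsum_Ico (φ : ℝ → ℝ≥0∞) {a b c : ℝ} (hab : a ≤ b) (hbc : b ≤ c) :
    (∑' x : Ico a b, φ x) + ∑' x : Ico b c, φ x = ∑' x : Ico a c, φ x := by
  rw [← Ico_union_Ico_eq_Ico hab hbc]
  exact (ENNReal.summable.tsum_union_disjoint Ico_disjoint_Ico_same
    ENNReal.summable).symm

lemma eVariationOn_le_eVariationOn_abs_add_tsum_absDefect {f L R : ℝ → ℝ}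
    (hL : ∀ x, Tendsto f (𝓝[<] x) (𝓝 (L x))) (hR : ∀ x, Tendsto f (𝓝[>] x) (𝓝 (R x)))
    {s : Set ℝ} (hs : s.OrdConnected) :
    eVariationOn f s ≤ eVariationOn (fun x => |f x|) s +
      ((∑' x : s, absDefect (f x) (L x)) + ∑' x : s, absDefect (f x) (R x)) := by
  refine iSup_le fun ⟨n, w, hw, hws⟩ => ?_
  have key : ∀ n, ∑ i ∈ Finset.range n, edist (f (w (i + 1))) (f (w i)) ≤
      eVariationOn (fun x => |f x|) (Icc (w 0) (w n)) +
        ((∑' x : Ioc (w 0) (w n), absDefect (f x) (L x)) +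
          ∑' x : Ico (w 0) (w n), absDefect (f x) (R x)) := by
    intro n
    induction n with
    | zero => simp
    | succ n ih =>
      have h0 : w 0 ≤ w n := hw n.zero_le
      have h1 : w n ≤ w (n + 1) := hw n.le_succ
      have hV := eVariationOn.Icc_add_Icc (fun x => |f x|) h0 h1 (mem_univ _)
      simp only [univ_inter] at hV
      rw [Finset.sum_range_succ, ← hV,
        ← ENNReal.tsum_Ioc_add_tsum_Ioc (fun x => absDefect (f x) (L x)) h0 h1,
        ← ENNReal.tsum_Ico_add_tsum_Ico (fun x => absDefect (f x) (R x)) h0 h1,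
        edist_comm (f (w (n + 1)))]
      refine (add_le_add ih (edist_le_eVariationOn_abs_add_tsum_absDefect hL hR h1)).trans_eq ?_
      ring
  have hsub : Icc (w 0) (w n) ⊆ s := hs.out (hws 0) (hws n)
  refine (key n).trans (add_le_add (eVariationOn.mono _ hsub) (add_le_add ?_ ?_))
  · exact ENNReal.tsum_mono_subtype (fun x => absDefect (f x) (L x))
      (Ioc_subset_Icc_self.trans hsub)
  · exact ENNReal.tsum_mono_subtype (fun x => absDefect (f x) (R x))
      (Ico_subset_Icc_self.trans hsub)

lemma eVariationOn_eq_add_edist_of_isOpen {g : ℝ → ℝ} {l r : ℝ} {s : Set ℝ} (hs : IsOpen s)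
    {x : ℝ} (hx : x ∈ s) (hl : Tendsto g (𝓝[<] x) (𝓝 l)) (hr : Tendsto g (𝓝[>] x) (𝓝 r)) :
    eVariationOn g s = (eVariationOn g (s ∩ Iio x) + edist (g x) l) +
      (eVariationOn g (s ∩ Ioi x) + edist (g x) r) := by
  have hlt : 𝓝[s ∩ Iio x] x = 𝓝[<] x := nhdsWithin_inter_of_mem
    (mem_nhdsWithin_of_mem_nhds (hs.mem_nhds hx))
  have hgt : 𝓝[s ∩ Ioi x] x = 𝓝[>] x := nhdsWithin_inter_of_mem
    (mem_nhdsWithin_of_mem_nhds (hs.mem_nhds hx))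
  rw [← eVariationOn.eVariationOn_on_inter_Iic_eq_Iio_add_edist (hlt ▸ inferInstance) hx
      (hlt ▸ hl),
    ← eVariationOn.eVariationOn_on_inter_Ici_eq_Ioi_add_edist (hgt ▸ inferInstance) hx
      (hgt ▸ hr),
    ← eVariationOn.union g (s := s ∩ Iic x) (t := s ∩ Ici x) (x := x)
      ⟨⟨hx, self_mem_Iic⟩, fun _ h => h.2⟩ ⟨⟨hx, self_mem_Ici⟩, fun _ h => h.2⟩,
    ← inter_union_distrib_left, Iic_union_Ici, inter_univ]

lemma eVariationOn_abs_add_sum_absDefect_le {f L R : ℝ → ℝ}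
    (hL : ∀ x, Tendsto f (𝓝[<] x) (𝓝 (L x))) (hR : ∀ x, Tendsto f (𝓝[>] x) (𝓝 (R x)))
    (T : Finset ℝ) {s : Set ℝ} (hs : IsOpen s) (hT : ↑T ⊆ s) :
    eVariationOn (fun x => |f x|) s +
      ∑ x ∈ T, (absDefect (f x) (L x) + absDefect (f x) (R x)) ≤ eVariationOn f s := by
  induction T using Finset.induction_on_max generalizing s with
  | empty => simpa using eVariationOn_abs_le f s
  | insert x T hlt ih =>
    have hx : x ∈ s := hT (by simp)
    have hT' : (T : Set ℝ) ⊆ s ∩ Iio x := fun y hy => ⟨hT (by simp_all), hlt y hy⟩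
    rw [Finset.sum_insert fun h => (hlt x h).false,
      eVariationOn_eq_add_edist_of_isOpen hs hx (hL x) (hR x),
      eVariationOn_eq_add_edist_of_isOpen hs hx (hL x).abs (hR x).abs,
      edist_eq_edist_abs_add_absDefect (f x) (L x), edist_eq_edist_abs_add_absDefect (f x) (R x)]
    calc _ = ((eVariationOn (fun x => |f x|) (s ∩ Iio x) +
              ∑ x ∈ T, (absDefect (f x) (L x) + absDefect (f x) (R x))) +
            (edist |f x| |L x| + absDefect (f x) (L x))) +
          (eVariationOn (fun x => |f x|) (s ∩ Ioi x) +
            (edist |f x| |R x| + absDefect (f x) (R x))) := by ring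
      _ ≤ _ := by
        gcongr
        · exact ih (hs.inter isOpen_Iio) hT'
        · exact eVariationOn_abs_le f _

lemma eVariationOn_eq_eVariationOn_abs_add_tsum_absDefect {f L R : ℝ → ℝ}
    (hL : ∀ x, Tendsto f (𝓝[<] x) (𝓝 (L x))) (hR : ∀ x, Tendsto f (𝓝[>] x) (𝓝 (R x)))
    {s : Set ℝ} (hs : IsOpen s) (hs' : s.OrdConnected) :
    eVariationOn f s = eVariationOn (fun x => |f x|) s +
      ((∑' x : s, absDefect (f x) (L x)) + ∑' x : s, absDefect (f x) (R x)) := by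
  refine (eVariationOn_le_eVariationOn_abs_add_tsum_absDefect hL hR hs').antisymm ?_
  rw [← ENNReal.tsum_add, ENNReal.tsum_eq_iSup_sum, ENNReal.add_iSup]
  refine iSup_le fun T => ?_
  have h := eVariationOn_abs_add_sum_absDefect_le hL hR
    (T.map (Function.Embedding.subtype _)) hs (by simp)
  simpa using h

lemma toReal_tsum_absDefect_eq_tsum_inter (f M : ℝ → ℝ) (s : Set ℝ) :
    (∑' x : s, absDefect (f x) (M x)).toReal =
      ∑' x : ↥(s ∩ {y | f y ≠ M y}), (|f x - M x| - abs (|f x| - |M x|)) := by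
  rw [ENNReal.tsum_toReal_eq (f := fun x : s => absDefect (f x) (M x))
      fun _ => ENNReal.ofReal_ne_top,
    tsum_subtype s fun x => (absDefect (f x) (M x)).toReal,
    tsum_subtype (s ∩ {y | f y ≠ M y}) fun x => |f x - M x| - abs (|f x| - |M x|)]
  refine tsum_congr fun x => ?_
  have h : (absDefect (f x) (M x)).toReal = |f x - M x| - abs (|f x| - |M x|) :=
    ENNReal.toReal_ofReal (sub_nonneg.2 (abs_abs_sub_abs_le _ _))
  by_cases hx : x ∈ s <;> by_cases hM : f x = M x <;> simp [indicator, hx, hM, h]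
  simp [absDefect]

theorem stmt3 (f : ℝ → ℝ) (hf : BVfun f) (a b : EReal) (hab : a < b) :
    varOn f (erealIoo a b) - varOn (fun x => |f x|) (erealIoo a b) =
      (∑' x : ↥(erealIoo a b ∩ {y | f y ≠ Function.leftLim f y}),
        (|f (x : ℝ) - Function.leftLim f (x : ℝ)| -
          abs (|f (x : ℝ)| - Function.leftLim (fun y => |f y|) (x : ℝ)))) +
      (∑' x : ↥(erealIoo a b ∩ {y | f y ≠ Function.rightLim f y}),
        (|f (x : ℝ) - Function.rightLim f (x : ℝ)| -
          abs (|f (x : ℝ)| - Function.rightLim (fun y => |f y|) (x : ℝ)))) := by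
  have hL : ∀ x, Tendsto f (𝓝[<] x) (𝓝 (Function.leftLim f x)) := hf.tendsto_leftLim
  have hR : ∀ x, Tendsto f (𝓝[>] x) (𝓝 (Function.rightLim f x)) := hf.tendsto_rightLim
  have hopen : IsOpen (erealIoo a b) := isOpen_Ioo.preimage continuous_coe_real_ereal
  have hord : (erealIoo a b).OrdConnected :=
    ordConnected_Ioo.preimage_mono EReal.coe_strictMono.monotone
  have h := eVariationOn_eq_eVariationOn_abs_add_tsum_absDefect hL hR hopen hord
  have hfin : eVariationOn f (erealIoo a b) ≠ ∞ := hf.mono (subset_univ _)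
  rw [h, ENNReal.add_ne_top, ENNReal.add_ne_top] at hfin
  simp only [leftLim_eq_of_tendsto (hL _).abs, rightLim_eq_of_tendsto (hR _).abs]
  rw [← toReal_tsum_absDefect_eq_tsum_inter, ← toReal_tsum_absDefect_eq_tsum_inter, varOn, varOn,
    h, ENNReal.toReal_add hfin.1 (ENNReal.add_ne_top.2 hfin.2),
    ENNReal.toReal_add hfin.2.1 hfin.2.2]
  ring
end

section
/- Let f ∈ BV(ℝ) and let (f_j) ⊂ BV(ℝ) with ‖f_j − f‖_{BV} → 0. Then Var(M̃f_j) → Var(M̃f), i.e., the total variations over ℝ of the uncentered maximal functions converge to the total variation of M̃f. -/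
open MeasureTheory Filter Set Topology

/-- Over a set of bounded variation, every partition sum is at most the variation. -/
theorem sum_abs_le_varOn {f : ℝ → ℝ} {s : Set ℝ} (hf : BoundedVariationOn f s) {x : ℕ → ℝ}
    (hx : Monotone x) (hxs : ∀ i, x i ∈ s) (n : ℕ) :
    ∑ i ∈ Finset.range n, |f (x (i + 1)) - f (x i)| ≤ varOn f s := by
  have h := ENNReal.toReal_mono hf (eVariationOn.sum_le (f := f) (n := n) hx hxs)
  rw [ENNReal.toReal_sum (fun _ _ => edist_ne_top _ _)] at h
  simpa only [varOn, edist_dist, Real.dist_eq, ENNReal.toReal_ofReal (abs_nonneg _)] using h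

/-- A uniform bound on all partition sums bounds the variation. -/
theorem eVariationOn_le_ofReal {f : ℝ → ℝ} {s : Set ℝ} {K : ℝ}
    (h : ∀ (n : ℕ) (x : ℕ → ℝ), Monotone x → (∀ i, x i ∈ s) →
      ∑ i ∈ Finset.range n, |f (x (i + 1)) - f (x i)| ≤ K) :
    eVariationOn f s ≤ ENNReal.ofReal K := by
  refine iSup_le ?_
  rintro ⟨n, x, hx, hxs⟩
  simp only [edist_dist, Real.dist_eq]
  rw [← ENNReal.ofReal_sum_of_nonneg (fun _ _ => abs_nonneg _)]
  exact ENNReal.ofReal_le_ofReal (h n x hx hxs)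

theorem boundedVariationOn_of_sum_abs_le {f : ℝ → ℝ} {s : Set ℝ} {K : ℝ}
    (h : ∀ (n : ℕ) (x : ℕ → ℝ), Monotone x → (∀ i, x i ∈ s) →
      ∑ i ∈ Finset.range n, |f (x (i + 1)) - f (x i)| ≤ K) :
    BoundedVariationOn f s :=
  ne_top_of_le_ne_top ENNReal.ofReal_ne_top (eVariationOn_le_ofReal h)

theorem varOn_le_of_sum_abs_le {f : ℝ → ℝ} {s : Set ℝ} (hs : s.Nonempty) {K : ℝ}
    (h : ∀ (n : ℕ) (x : ℕ → ℝ), Monotone x → (∀ i, x i ∈ s) →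
      ∑ i ∈ Finset.range n, |f (x (i + 1)) - f (x i)| ≤ K) :
    varOn f s ≤ K := by
  obtain ⟨p, hp⟩ := hs
  have hK : 0 ≤ K := by simpa using h 0 (fun _ => p) monotone_const (fun _ => hp)
  exact ENNReal.toReal_le_of_le_ofReal hK (eVariationOn_le_ofReal h)

/-- Partition sums come arbitrarily close to the variation. -/
theorem exists_sum_abs_gt {f : ℝ → ℝ} {ε : ℝ} (hε : 0 < ε) :
    ∃ (n : ℕ) (x : ℕ → ℝ), Monotone x ∧
      varOn f univ - ε < ∑ i ∈ Finset.range n, |f (x (i + 1)) - f (x i)| := by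
  by_contra! hcon
  have := varOn_le_of_sum_abs_le (f := f) univ_nonempty (fun n x hx _ => hcon n x hx)
  linarith

theorem BVfun.boundedVariationOn {f : ℝ → ℝ} (hf : BVfun f) (s : Set ℝ) :
    BoundedVariationOn f s :=
  BoundedVariationOn.mono hf (subset_univ s)

theorem BVfun.varOn_Icc_add_Icc {f : ℝ → ℝ} (hf : BVfun f) {a b c : ℝ} (hab : a ≤ b)
    (hbc : b ≤ c) : varOn f (Icc a b) + varOn f (Icc b c) = varOn f (Icc a c) := by
  have h := eVariationOn.Icc_add_Icc f hab hbc (mem_univ b)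
  simp only [univ_inter] at h
  rw [varOn, varOn, varOn, ← h,
    ENNReal.toReal_add (hf.boundedVariationOn _) (hf.boundedVariationOn _)]

theorem BVfun.abs_sub_le_varOn {f : ℝ → ℝ} (hf : BVfun f) {s : Set ℝ} {a b : ℝ} (ha : a ∈ s)
    (hb : b ∈ s) : |f a - f b| ≤ varOn f s :=
  (hf.boundedVariationOn s).dist_le ha hb

theorem BVfun.varOn_le_univ {f : ℝ → ℝ} (hf : BVfun f) (s : Set ℝ) :
    varOn f s ≤ varOn f univ :=
  ENNReal.toReal_mono hf (eVariationOn.mono f (subset_univ s))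

/-- The variation of a BV function on `[s, t]` dominates the variation up to `y` plus the two
increments along `y ≤ r ≤ t`. -/
theorem BVfun.varOn_add_abs_add_abs_le {f : ℝ → ℝ} (hf : BVfun f) {s y r t : ℝ} (hsy : s ≤ y)
    (hyr : y ≤ r) (hrt : r ≤ t) :
    varOn f (Icc s y) + |f y - f r| + |f r - f t| ≤ varOn f (Icc s t) := by
  have h₁ := hf.varOn_Icc_add_Icc hsy (hyr.trans hrt)
  have h₂ := hf.varOn_Icc_add_Icc hyr hrt
  have h₃ := hf.abs_sub_le_varOn (left_mem_Icc.2 hyr) (right_mem_Icc.2 hyr)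
  have h₄ := hf.abs_sub_le_varOn (left_mem_Icc.2 hrt) (right_mem_Icc.2 hrt)
  linarith

theorem BVfun.abs_le_bvNorm {f : ℝ → ℝ} (hf : BVfun f) (x : ℝ) : |f x| ≤ bvNorm f := by
  have hlim : Tendsto f atBot (𝓝 (limUnder atBot f)) :=
    BoundedVariationOn.tendsto_atBot_limUnder hf
  have h : |f x - limUnder atBot f| ≤ varOn f univ :=
    le_of_tendsto (hlim.const_sub (f x)).abs
      (Eventually.of_forall fun y => hf.abs_sub_le_varOn (mem_univ x) (mem_univ y))
  have := abs_sub_abs_le_abs_sub (f x) (limUnder atBot f)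
  rw [bvNorm]
  linarith

theorem varOn_nonneg (f : ℝ → ℝ) (s : Set ℝ) : 0 ≤ varOn f s := ENNReal.toReal_nonneg

theorem BVfun.sub {f g : ℝ → ℝ} (hf : BVfun f) (hg : BVfun g) : BVfun (f - g) := by
  refine boundedVariationOn_of_sum_abs_le (K := varOn f univ + varOn g univ) fun n x hx hxs => ?_
  refine le_trans ?_ (add_le_add (sum_abs_le_varOn hf hx hxs n) (sum_abs_le_varOn hg hx hxs n))
  rw [← Finset.sum_add_distrib]
  refine Finset.sum_le_sum fun i _ => ?_
  have := abs_sub (f (x (i + 1)) - f (x i)) (g (x (i + 1)) - g (x i))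
  simp only [Pi.sub_apply]
  rwa [show f (x (i + 1)) - g (x (i + 1)) - (f (x i) - g (x i)) =
    f (x (i + 1)) - f (x i) - (g (x (i + 1)) - g (x i)) by ring]

theorem BVfun.varOn_le_add_varOn_sub {f g : ℝ → ℝ} (hf : BVfun f) (hg : BVfun g) :
    varOn g univ ≤ varOn f univ + varOn (g - f) univ := by
  refine varOn_le_of_sum_abs_le univ_nonempty fun n x hx hxs => ?_
  refine le_trans ?_ (add_le_add (sum_abs_le_varOn hf hx hxs n)
    (sum_abs_le_varOn (hg.sub hf) hx hxs n))
  rw [← Finset.sum_add_distrib]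
  refine Finset.sum_le_sum fun i _ => ?_
  have := abs_add_le (f (x (i + 1)) - f (x i)) ((g - f) (x (i + 1)) - (g - f) (x i))
  simp only [Pi.sub_apply] at this ⊢
  rwa [show f (x (i + 1)) - f (x i) + (g (x (i + 1)) - f (x (i + 1)) - (g (x i) - f (x i))) =
    g (x (i + 1)) - g (x i) by ring] at this

/-- Partition sums of uniformly close functions are close. -/
theorem sum_abs_le_sum_abs_add {f g : ℝ → ℝ} {δ : ℝ} (h : ∀ x, |f x - g x| ≤ δ) (n : ℕ)
    (x : ℕ → ℝ) :
    ∑ i ∈ Finset.range n, |f (x (i + 1)) - f (x i)| ≤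
      ∑ i ∈ Finset.range n, |g (x (i + 1)) - g (x i)| + 2 * n * δ := by
  have : ∑ i ∈ Finset.range n, |f (x (i + 1)) - f (x i)| ≤
      ∑ i ∈ Finset.range n, (|g (x (i + 1)) - g (x i)| + 2 * δ) :=
    Finset.sum_le_sum fun i _ => by grind
  rw [Finset.sum_add_distrib, Finset.sum_const, Finset.card_range, nsmul_eq_mul] at this
  linarith

theorem BVfun.intervalIntegrable_abs {f : ℝ → ℝ} (hf : BVfun f) (a b : ℝ) :
    IntervalIntegrable (fun t => |f t|) volume a b := by
  obtain ⟨p, q, hp, hq, rfl⟩ :=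
    (BoundedVariationOn.locallyBoundedVariationOn hf).exists_monotoneOn_sub_monotoneOn
  exact (((hp.mono (subset_univ _)).intervalIntegrable).sub
    ((hq.mono (subset_univ _)).intervalIntegrable)).abs

theorem mAvg_eq_setAverage (f : ℝ → ℝ) {a b : ℝ} (hab : a < b) :
    mAvg f a b = ⨍ t in Ioc a b, |f t| := by
  rw [mAvg, ← interval_average_eq_div, uIoc_of_le hab.le]

theorem BVfun.exists_abs_le_mAvg {f : ℝ → ℝ} (hf : BVfun f) {a b : ℝ} (hab : a < b) :
    ∃ y ∈ Icc a b, |f y| ≤ mAvg f a b := by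
  rw [mAvg_eq_setAverage f hab]
  obtain ⟨y, hy, h⟩ := exists_le_setAverage (μ := volume) (s := Ioc a b) (f := fun t => |f t|)
    (by simp [hab]) (by simp) ((intervalIntegrable_iff_integrableOn_Ioc_of_le hab.le).1
      (hf.intervalIntegrable_abs a b))
  exact ⟨y, Ioc_subset_Icc_self hy, h⟩

theorem BVfun.exists_mAvg_le_abs {f : ℝ → ℝ} (hf : BVfun f) {a b : ℝ} (hab : a < b) :
    ∃ y ∈ Icc a b, mAvg f a b ≤ |f y| := by
  rw [mAvg_eq_setAverage f hab]
  obtain ⟨y, hy, h⟩ := exists_setAverage_le (μ := volume) (s := Ioc a b) (f := fun t => |f t|)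
    (by simp [hab]) (by simp) ((intervalIntegrable_iff_integrableOn_Ioc_of_le hab.le).1
      (hf.intervalIntegrable_abs a b))
  exact ⟨y, Ioc_subset_Icc_self hy, h⟩

theorem BVfun.mAvg_le_bvNorm {f : ℝ → ℝ} (hf : BVfun f) {a b : ℝ} (hab : a < b) :
    mAvg f a b ≤ bvNorm f := by
  obtain ⟨y, -, hy⟩ := hf.exists_mAvg_le_abs hab
  exact hy.trans (hf.abs_le_bvNorm y)

theorem BVfun.mAvg_le_uMax {f : ℝ → ℝ} (hf : BVfun f) {a b x : ℝ} (hab : a < b) (hax : a ≤ x)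
    (hxb : x ≤ b) : mAvg f a b ≤ uMax f x := by
  refine le_csSup ⟨bvNorm f, ?_⟩ ⟨a, b, hab, hax, hxb, rfl⟩
  rintro _ ⟨c, d, hcd, -, -, rfl⟩
  exact hf.mAvg_le_bvNorm hcd

theorem uMax_le {f : ℝ → ℝ} {x K : ℝ}
    (h : ∀ a b, a < b → a ≤ x → x ≤ b → mAvg f a b ≤ K) : uMax f x ≤ K := by
  refine csSup_le ⟨_, x, x + 1, by linarith, le_rfl, by linarith, rfl⟩ ?_
  rintro _ ⟨a, b, hab, hax, hxb, rfl⟩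
  exact h a b hab hax hxb

theorem exists_lt_mAvg_of_lt_uMax {f : ℝ → ℝ} {x K : ℝ} (h : K < uMax f x) :
    ∃ a b, a < b ∧ a ≤ x ∧ x ≤ b ∧ K < mAvg f a b := by
  by_contra! hcon
  exact absurd (uMax_le hcon) (not_le.2 h)

theorem BVfun.uMax_nonneg {f : ℝ → ℝ} (hf : BVfun f) (x : ℝ) : 0 ≤ uMax f x := by
  obtain ⟨y, -, hy⟩ := hf.exists_abs_le_mAvg (a := x) (b := x + 1) (by linarith)
  exact ((abs_nonneg _).trans hy).trans (hf.mAvg_le_uMax (by linarith) le_rfl (by linarith))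

theorem BVfun.uMax_le_bvNorm {f : ℝ → ℝ} (hf : BVfun f) (x : ℝ) : uMax f x ≤ bvNorm f :=
  uMax_le fun _ _ hab _ _ => hf.mAvg_le_bvNorm hab

/-- The maximal operator is sublinear, hence monotone up to the sup distance. -/
theorem uMax_le_uMax_add {f g : ℝ → ℝ} (hf : BVfun f) (hg : BVfun g) {δ : ℝ}
    (h : ∀ x, |f x - g x| ≤ δ) (x : ℝ) : uMax f x ≤ uMax g x + δ := by
  refine uMax_le fun a b hab hax hxb => ?_
  have hmono : ∫ t in a..b, |f t| ≤ ∫ t in a..b, (|g t| + δ) :=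
    intervalIntegral.integral_mono_on hab.le (hf.intervalIntegrable_abs a b)
      ((hg.intervalIntegrable_abs a b).add intervalIntegrable_const)
      fun t _ => by grind
  rw [intervalIntegral.integral_add (hg.intervalIntegrable_abs a b) intervalIntegrable_const,
    intervalIntegral.integral_const, smul_eq_mul] at hmono
  have hpos : 0 < b - a := sub_pos.2 hab
  have : mAvg f a b ≤ mAvg g a b + δ := by
    rw [mAvg, mAvg, div_add' _ _ _ hpos.ne', div_le_div_iff_of_pos_right hpos]
    linarith
  linarith [hg.mAvg_le_uMax hab hax hxb]

theorem abs_uMax_sub_uMax_le {f g : ℝ → ℝ} (hf : BVfun f) (hg : BVfun g) {δ : ℝ}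
    (h : ∀ x, |f x - g x| ≤ δ) (x : ℝ) : |uMax f x - uMax g x| ≤ δ := by
  have h₁ := uMax_le_uMax_add hf hg h x
  have h₂ := uMax_le_uMax_add hg hf (fun y => by rw [abs_sub_comm]; exact h y) x
  rw [abs_le]
  constructor <;> linarith

/-- `Zigzag u s n a W`: there are points `s ≤ a₀ ≤ b₁ ≤ a₁ ≤ ⋯ ≤ bₙ ≤ aₙ = a` with
`W = ∑ u bᵢ - ∑ u aᵢ`. -/
inductive Zigzag (u : ℝ → ℝ) (s : ℝ) : ℕ → ℝ → ℝ → Prop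
  | base {a : ℝ} : s ≤ a → Zigzag u s 0 a (-u a)
  | step {n : ℕ} {a b a' W : ℝ} : Zigzag u s n a W → a ≤ b → b ≤ a' →
      Zigzag u s (n + 1) a' (W + u b - u a')

theorem Zigzag.left_le {u : ℝ → ℝ} {s : ℝ} {n : ℕ} {a W : ℝ} (h : Zigzag u s n a W) :
    s ≤ a := by
  induction h with
  | base h => exact h
  | step _ h₁ h₂ ih => exact ih.trans (h₁.trans h₂)

theorem Zigzag.move_last {u : ℝ → ℝ} {s : ℝ} {n : ℕ} {a a' W : ℝ} (h : Zigzag u s n a W)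
    (ha : a ≤ a') : Zigzag u s n a' (W + u a - u a') := by
  cases h with
  | base h =>
    have := Zigzag.base (u := u) (h.trans ha)
    rwa [show -u a + u a - u a' = -u a' by ring]
  | @step _ _ b _ W h h₁ h₂ =>
    have := h.step h₁ (h₂.trans ha)
    rwa [show W + u b - u a + u a - u a' = W + u b - u a' by ring]

/-- A strict peak of the maximal function between two points is nearly attained by `|f|` strictly
between them; to its right, before any given `t`, `|f|` is as small as the right valley. -/
theorem BVfun.exists_peak_valley {f : ℝ → ℝ} (hf : BVfun f) {a b a' t ε : ℝ} (hab : a ≤ b)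
    (hba' : b ≤ a') (hlast : a' ≤ t) (hl : uMax f a < uMax f b) (hr : uMax f a' < uMax f b)
    (hε : 0 < ε) :
    ∃ y r, a < y ∧ y ≤ r ∧ r ≤ t ∧ uMax f b - ε < |f y| ∧ |f r| ≤ uMax f a' := by
  obtain ⟨α, β, hαβ, hαb, hbβ, havg⟩ := exists_lt_mAvg_of_lt_uMax
    (max_lt (max_lt hl hr) (sub_lt_self (uMax f b) hε))
  simp only [max_lt_iff] at havg
  have haα : a < α := by
    by_contra! hcon
    linarith [hf.mAvg_le_uMax hαβ hcon (hab.trans hbβ), havg.1.1]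
  have hβa' : β < a' := by
    by_contra! hcon
    linarith [hf.mAvg_le_uMax hαβ (hαb.trans hba') hcon, havg.1.2]
  obtain ⟨y, hy, hfy⟩ := hf.exists_mAvg_le_abs hαβ
  obtain ⟨r, hr, hfr⟩ := hf.exists_abs_le_mAvg (hβa'.trans_le hlast)
  exact ⟨y, r, haα.trans_le hy.1, hy.2.trans hr.1, hr.2, havg.2.trans_le hfy,
    hfr.trans (hf.mAvg_le_uMax (hβa'.trans_le hlast) hβa'.le hlast)⟩

/-- A zigzag of the maximal function is dominated by the variation of `f`, with both endpoints
counted as peaks. -/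
theorem BVfun.abs_add_zigzag_le {f : ℝ → ℝ} (hf : BVfun f) {s : ℝ} {n : ℕ} :
    ∀ {a W q : ℝ}, Zigzag (uMax f) s n a W → a ≤ q → s < q →
      |f q| + |f s| + 2 * W ≤ varOn f (Icc s q) := by
  induction n with
  | zero =>
    rintro a W q (⟨hsa⟩ | _) haq hsq
    obtain ⟨r, hr, hfr⟩ := hf.exists_abs_le_mAvg hsq
    have h₁ := hfr.trans (hf.mAvg_le_uMax hsq hsa haq)
    have h₂ := hf.varOn_add_abs_add_abs_le le_rfl hr.1 hr.2
    have h₃ := varOn_nonneg f (Icc s s)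
    have h₄ := abs_sub_abs_le_abs_sub (f s) (f r)
    have h₅ := abs_sub_abs_le_abs_sub (f q) (f r)
    rw [abs_sub_comm (f q)] at h₅
    linarith
  | succ n ih =>
    rintro a' W' q (_ | @⟨_, a, b, _, W, hz, hab, hba'⟩) hlast hsq
    by_cases hr : uMax f a' < uMax f b
    · by_cases hl : uMax f a < uMax f b
      · refine le_of_forall_pos_le_add fun ε hε => ?_
        obtain ⟨y, r, hay, hyr, hrq, hfy, hfr⟩ :=
          hf.exists_peak_valley hab hba' hlast hl hr (half_pos hε)
        have hsy := hz.left_le.trans_lt hay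
        have h₁ := ih hz hay.le hsy
        have h₂ := hf.varOn_add_abs_add_abs_le hsy.le hyr hrq
        have h₄ := abs_sub_abs_le_abs_sub (f y) (f r)
        have h₅ := abs_sub_abs_le_abs_sub (f q) (f r)
        rw [abs_sub_comm (f q)] at h₅
        linarith
      · have := ih (hz.move_last (hab.trans hba')) hlast hsq
        linarith
    · have := ih hz (hab.trans (hba'.trans hlast)) hsq
      linarith

/-- The increments of `s, y, r, t`, with `y` a peak of the absolute value, dominate `|t - s|`
either with or without the valley `r`. -/
theorem abs_peak_dichotomy (s y r t : ℝ) :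
    |y| - |s| + |t - s| ≤ |y - t| ∨
      2 * |y| - 2 * |r| + |t - s| ≤ |y - s| + |y - r| + |r - t| := by
  grind

/-- A zigzag of the maximal function on `[s, t]`, with one valley discounted, is dominated by the
failure of `f` to be monotone on `[s, t]`. -/
theorem BVfun.zigzag_add_le {f : ℝ → ℝ} (hf : BVfun f) {s c : ℝ} {n : ℕ} :
    ∀ {a W t : ℝ}, Zigzag (uMax f) s n a W → a ≤ t → (∀ p ∈ Icc s t, c ≤ uMax f p) →
      2 * W + 2 * c + |f t - f s| ≤ varOn f (Icc s t) := by
  induction n with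
  | zero =>
    rintro a W t (⟨hsa⟩ | _) hat hc
    have h₁ := hc a ⟨hsa, hat⟩
    have h₂ := hf.abs_sub_le_varOn (right_mem_Icc.2 (hsa.trans hat))
      (left_mem_Icc.2 (hsa.trans hat))
    linarith
  | succ n ih =>
    rintro a' W' t (_ | @⟨_, a, b, _, W, hz, hab, hba'⟩) hlast hc
    by_cases hr : uMax f a' < uMax f b
    · by_cases hl : uMax f a < uMax f b
      · refine le_of_forall_pos_le_add fun ε hε => ?_
        obtain ⟨y, r, hay, hyr, hrt, hfy, hfr⟩ :=
          hf.exists_peak_valley hab hba' hlast hl hr (half_pos hε)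
        have hsy := hz.left_le.trans_lt hay
        have hA := hf.abs_add_zigzag_le hz hay.le hsy
        have hB := ih hz hay.le fun p hp => hc p ⟨hp.1, hp.2.trans (hyr.trans hrt)⟩
        have h₂ := hf.varOn_add_abs_add_abs_le hsy.le hyr hrt
        have h₃ := hf.varOn_add_abs_add_abs_le hsy.le (hyr.trans hrt) le_rfl
        have h₄ := hc a' ⟨hz.left_le.trans (hab.trans hba'), hlast⟩
        have h₅ := abs_peak_dichotomy (f s) (f y) (f r) (f t)
        rw [sub_self, abs_zero, add_zero] at h₃
        rcases h₅ with h₅ | h₅ <;> linarith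
      · have := ih (hz.move_last (hab.trans hba')) hlast hc
        linarith
    · have := ih hz (hab.trans (hba'.trans hlast)) hc
      linarith

/-- Every partition sum is dominated by a zigzag. -/
theorem exists_zigzag_of_partition (u : ℝ → ℝ) {s : ℝ} {x : ℕ → ℝ} (hx : Monotone x)
    (hs : s ≤ x 0) (n : ℕ) :
    ∃ m a W, Zigzag u s m a W ∧ a ≤ x n ∧
      ∑ i ∈ Finset.range n, |u (x (i + 1)) - u (x i)| ≤ u s + u (x n) + 2 * W := by
  induction n with
  | zero =>
    rcases le_total (u s) (u (x 0)) with h | h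
    · exact ⟨0, s, -u s, .base le_rfl, hs, by simp; linarith⟩
    · exact ⟨0, x 0, -u (x 0), .base hs, le_rfl, by simp; linarith⟩
  | succ n ih =>
    obtain ⟨m, a, W, hz, ha, hsum⟩ := ih
    have hn := hx n.le_succ
    rw [Finset.sum_range_succ]
    rcases le_total (u (x n)) (u (x (n + 1))) with h | h
    · refine ⟨m, a, W, hz, ha.trans hn, ?_⟩
      rw [abs_of_nonneg (sub_nonneg.2 h)]
      linarith
    · refine ⟨m + 1, x (n + 1), _, hz.step ha hn, le_rfl, ?_⟩
      rw [abs_of_nonpos (sub_nonpos.2 h)]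
      linarith

theorem BVfun.sum_abs_uMax_le {f : ℝ → ℝ} (hf : BVfun f) {s t c : ℝ} {x : ℕ → ℝ}
    (hx : Monotone x) (hs : s ≤ x 0) (n : ℕ) (ht : x n ≤ t)
    (hc : ∀ p ∈ Icc s t, c ≤ uMax f p) :
    ∑ i ∈ Finset.range n, |uMax f (x (i + 1)) - uMax f (x i)| ≤
      uMax f s + uMax f t - 2 * c + (varOn f (Icc s t) - |f t - f s|) := by
  obtain ⟨m, a, W, hz, ha, hsum⟩ := exists_zigzag_of_partition (uMax f) hx hs n
  rcases le_total (uMax f (x n)) (uMax f t) with h | h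
  · have := hf.zigzag_add_le hz (ha.trans ht) hc
    linarith
  · have := hf.zigzag_add_le (hz.step ha ht) le_rfl hc
    linarith

/-- The maximal function of a BV function has bounded variation. -/
theorem BVfun.bvfun_uMax {f : ℝ → ℝ} (hf : BVfun f) : BVfun (uMax f) := by
  refine boundedVariationOn_of_sum_abs_le (K := 2 * bvNorm f + varOn f univ) fun n x hx _ => ?_
  have h := hf.sum_abs_uMax_le hx le_rfl n le_rfl fun p _ => hf.uMax_nonneg p
  have h₁ := hf.uMax_le_bvNorm (x 0)
  have h₂ := hf.uMax_le_bvNorm (x n)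
  have h₃ := hf.varOn_le_univ (Icc (x 0) (x n))
  have h₄ := abs_nonneg (f (x n) - f (x 0))
  linarith

/-- If the maximal functions of `f` and `g` are `δ`-close, then on `[s, t]` the variation of the
former exceeds that of the latter by at most `4δ` plus the failure of `f` to be monotone. -/
theorem BVfun.varOn_uMax_Icc_le {f g : ℝ → ℝ} (hf : BVfun f) (hg : BVfun g) {δ : ℝ}
    (h : ∀ x, |uMax f x - uMax g x| ≤ δ) {s t : ℝ} (hst : s ≤ t) :
    varOn (uMax f) (Icc s t) ≤ varOn (uMax g) (Icc s t) + 4 * δ +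
      (varOn f (Icc s t) - |f t - f s|) := by
  refine varOn_le_of_sum_abs_le (nonempty_Icc.2 hst) fun n x hx hxs => ?_
  have hc : ∀ p ∈ Icc s t, (uMax g s + uMax g t -
      varOn (uMax g) (Icc s t)) / 2 - δ ≤ uMax f p := by
    intro p hp
    have h₁ := hg.bvfun_uMax.varOn_add_abs_add_abs_le le_rfl hp.1 hp.2
    have h₂ := varOn_nonneg (uMax g) (Icc s s)
    have h₃ := le_abs_self (uMax g s - uMax g p)
    have h₄ := neg_abs_le (uMax g p - uMax g t)
    have h₅ := (abs_le.1 (h p)).1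
    linarith
  have h₁ := hf.sum_abs_uMax_le hx (hxs 0).1 n (hxs n).2 hc
  have h₂ := (abs_le.1 (h s)).2
  have h₃ := (abs_le.1 (h t)).2
  linarith

theorem BVfun.varOn_uMax_partition_le {f g : ℝ → ℝ} (hf : BVfun f) (hg : BVfun g) {δ : ℝ}
    (h : ∀ x, |uMax f x - uMax g x| ≤ δ) {T : ℕ → ℝ} (hT : Monotone T) (n : ℕ) :
    varOn (uMax f) (Icc (T 0) (T n)) ≤ varOn (uMax g) (Icc (T 0) (T n)) +
      4 * n * δ + (varOn f (Icc (T 0) (T n)) -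
        ∑ i ∈ Finset.range n, |f (T (i + 1)) - f (T i)|) := by
  induction n with
  | zero =>
    have h₁ := varOn_nonneg (uMax g) (Icc (T 0) (T 0))
    have h₂ := varOn_nonneg f (Icc (T 0) (T 0))
    have h₃ : varOn (uMax f) (Icc (T 0) (T 0)) = 0 := by
      rw [varOn, eVariationOn.subsingleton _ (by simp), ENNReal.toReal_zero]
    simp only [Nat.cast_zero, Finset.range_zero, Finset.sum_empty]
    linarith
  | succ n ih =>
    have h₀ := hT (Nat.zero_le n)
    have h₁ := hT n.le_succ
    have h₂ := hf.varOn_uMax_Icc_le hg h h₁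
    have h₃ := hf.varOn_Icc_add_Icc h₀ h₁
    have h₄ := hf.bvfun_uMax.varOn_Icc_add_Icc h₀ h₁
    have h₅ := hg.bvfun_uMax.varOn_Icc_add_Icc h₀ h₁
    rw [Finset.sum_range_succ]
    push_cast
    linarith

theorem BVfun.varOn_uMax_le {f g : ℝ → ℝ} (hf : BVfun f) (hg : BVfun g) {δ : ℝ}
    (h : ∀ x, |uMax f x - uMax g x| ≤ δ) {T : ℕ → ℝ} (hT : Monotone T) (n : ℕ) :
    varOn (uMax f) univ ≤ varOn (uMax g) univ + 4 * (n + 2) * δ +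
      (varOn f univ - ∑ i ∈ Finset.range n, |f (T (i + 1)) - f (T i)|) := by
  refine varOn_le_of_sum_abs_le univ_nonempty fun m x hx _ => ?_
  set s := min (x 0) (T 0)
  set t := max (x m) (T n)
  have hs : s ≤ T 0 := min_le_right _ _
  have ht : T n ≤ t := le_max_right _ _
  have hT₀ := hT (Nat.zero_le n)
  have hsum : ∑ i ∈ Finset.range m, |uMax f (x (i + 1)) - uMax f (x i)| ≤
      varOn (uMax f) (Icc s t) := by
    have hx' : ∀ i, x (min i m) ∈ Icc s t := fun i =>
      ⟨(min_le_left _ _).trans (hx (Nat.zero_le _)),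
        (hx (min_le_right _ _)).trans (le_max_left _ _)⟩
    refine le_trans (le_of_eq ?_) (sum_abs_le_varOn (hf.bvfun_uMax.boundedVariationOn (Icc s t))
      (x := fun i => x (min i m)) (fun i j hij => hx (min_le_min_right m hij)) hx' m)
    refine Finset.sum_congr rfl fun i hi => ?_
    have hi' := Finset.mem_range.1 hi
    rw [min_eq_left hi'.le, min_eq_left (Nat.succ_le_of_lt hi')]
  have a₁ := hf.varOn_uMax_Icc_le hg h hs
  have a₂ := hf.varOn_uMax_partition_le hg h hT n
  have a₃ := hf.varOn_uMax_Icc_le hg h ht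
  have b₁ := hf.bvfun_uMax.varOn_Icc_add_Icc hs (hT₀.trans ht)
  have b₂ := hf.bvfun_uMax.varOn_Icc_add_Icc hT₀ ht
  have c₁ := hg.bvfun_uMax.varOn_Icc_add_Icc hs (hT₀.trans ht)
  have c₂ := hg.bvfun_uMax.varOn_Icc_add_Icc hT₀ ht
  have d₁ := hf.varOn_Icc_add_Icc hs (hT₀.trans ht)
  have d₂ := hf.varOn_Icc_add_Icc hT₀ ht
  have e₁ := hg.bvfun_uMax.varOn_le_univ (Icc s t)
  have e₂ := hf.varOn_le_univ (Icc s t)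
  have k₁ := abs_nonneg (f (T 0) - f s)
  have k₂ := abs_nonneg (f t - f (T n))
  linarith

theorem stmt9 (f : ℝ → ℝ) (hf : BVfun f) (fj : ℕ → ℝ → ℝ) (hfj : ∀ j, BVfun (fj j))
    (hconv : Tendsto (fun j => bvNorm (fj j - f)) atTop (𝓝 0)) :
    Tendsto (fun j => varOn (uMax (fj j)) Set.univ) atTop
      (𝓝 (varOn (uMax f) Set.univ)) := by
  have hclose : ∀ j x, |fj j x - f x| ≤ bvNorm (fj j - f) := fun j x =>
    ((hfj j).sub hf).abs_le_bvNorm x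
  have hMclose : ∀ j x, |uMax (fj j) x - uMax f x| ≤ bvNorm (fj j - f) := fun j x =>
    abs_uMax_sub_uMax_le (hfj j) hf (hclose j) x
  rw [Metric.tendsto_nhds]
  intro ε hε
  obtain ⟨n, T, hT, hsumT⟩ := exists_sum_abs_gt (f := f) (half_pos hε)
  obtain ⟨m, x, hx, hsumx⟩ := exists_sum_abs_gt (f := uMax f) (half_pos hε)
  have hupper : ∀ᶠ j in atTop, (4 * (n + 2) + 1 + 2 * n) * bvNorm (fj j - f) < ε / 2 := by
    refine (hconv.const_mul (4 * ((n : ℝ) + 2) + 1 + 2 * n)).eventually_lt_const ?_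
    rw [mul_zero]
    exact half_pos hε
  have hlower : ∀ᶠ j in atTop, (2 * m) * bvNorm (fj j - f) < ε / 2 := by
    refine (hconv.const_mul (2 * (m : ℝ))).eventually_lt_const ?_
    rw [mul_zero]
    exact half_pos hε
  filter_upwards [hupper, hlower] with j hj₁ hj₂
  have h₁ := (hfj j).varOn_uMax_le hf (hMclose j) hT n
  have h₂ := sum_abs_le_sum_abs_add (f := f) (g := fj j)
    (fun y => by rw [abs_sub_comm]; exact hclose j y) n T
  have h₃ := hf.varOn_le_add_varOn_sub (hfj j)
  have h₄ : varOn (fj j - f) univ ≤ bvNorm (fj j - f) :=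
    le_add_of_nonneg_left (abs_nonneg _)
  have h₅ := sum_abs_le_sum_abs_add (f := uMax f) (g := uMax (fj j))
    (fun y => by rw [abs_sub_comm]; exact hMclose j y) m x
  have h₆ := sum_abs_le_varOn (hfj j).bvfun_uMax hx (fun _ => mem_univ _) m
  rw [Real.dist_eq, abs_lt]
  constructor <;> linarith
end
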